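/- arXiv:1612.01754 — 3 statements merged into one kernel-verified Lean document; each statement's English description precedes it below -/
import Mathlib

section
/- Let n ≥ 2 be an integer, r a real number with r > n(n−1), and A a self-adjoint linear endomorphism of the n-dimensional real Euclidean space ℝⁿ. Define C := (1/n)·tr(A²), and for each (n−1)-dimensional subspace L of ℝⁿ define C(L) := (1/(n−1))·tr((P_L ∘ A ∘ P_L)²), where P_L is the orthogonal projection of ℝⁿ onto L. Then (tr A)² ≤ (n+r)·C − ((n−1)(n+r)(r−n²+n)/(rn))·sup{ C(L) : L an (n−1)-dimensional subspace of ℝⁿ }. -/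
/-!
Let `L` be a hyperplane, `P` and `Q` the orthogonal projections onto `L` and `Lᗮ`. Block
decomposition gives `tr A = tr PAP + tr QAQ`, and dropping the off-diagonal blocks of the
self-adjoint `A` gives `tr (A²) ≥ tr ((PAP)²) + tr ((QAQ)²)`. Cauchy–Schwarz for the trace form
bounds `(tr PAP)²` by `dim L · tr ((PAP)²)` and `(tr QAQ)²` by `dim Lᗮ · tr ((QAQ)²)`. The
inequality `n r (s + h)² ≤ (n + r) (n s² + r h²)`, whose defect is `(n s - r h)²`, combines
these bounds into the claim for one hyperplane; since the coefficient of `C(L)` is nonnegative, the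
supremum over hyperplanes may then be taken.
-/

open Module

theorem exists_submodule_finrank_add_one (K V : Type*) [Field K] [AddCommGroup V] [Module K V]
    [FiniteDimensional K V] [Nontrivial V] :
    ∃ W : Submodule K V, finrank K W + 1 = finrank K V := by
  obtain ⟨f, hf⟩ := exists_ne (0 : Dual K V)
  exact ⟨LinearMap.ker f, Dual.finrank_ker_add_one_of_ne_zero hf⟩

section Idempotent

theorem mul_mul_self_mul_of_isIdempotentElem {R : Type*} [Ring R] {p : R}
    (hp : IsIdempotentElem p) (f : R) :
    p * (f * f) * p =
      (p * f * p) * (p * f * p) + (p * f * (1 - p)) * ((1 - p) * f * p) :=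
  calc p * (f * f) * p = p * f * p * (f * p) + p * f * (1 - p) * (f * p) := by noncomm_ring
    _ = p * f * (p * p) * (f * p) + p * f * ((1 - p) * (1 - p)) * (f * p) := by
      rw [hp.eq, hp.one_sub.eq]
    _ = (p * f * p) * (p * f * p) + (p * f * (1 - p)) * ((1 - p) * f * p) := by
      simp only [mul_assoc]

variable {R M : Type*} [CommRing R] [AddCommGroup M] [Module R M] {p : End R M}

theorem trace_eq_add_of_isIdempotentElem (hp : IsIdempotentElem p) (f : End R M) :
    LinearMap.trace R M f =
      LinearMap.trace R M (p * f * p) + LinearMap.trace R M ((1 - p) * f * (1 - p)) := by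
  rw [LinearMap.trace_mul_cycle R p, hp.eq, LinearMap.trace_mul_cycle R (1 - p),
    hp.one_sub.eq, ← map_add]
  congr 1
  noncomm_ring

theorem trace_mul_self_eq_of_isIdempotentElem (hp : IsIdempotentElem p) (f : End R M) :
    LinearMap.trace R M (f * f) =
      LinearMap.trace R M ((p * f * p) * (p * f * p)) +
        LinearMap.trace R M (((1 - p) * f * (1 - p)) * ((1 - p) * f * (1 - p))) +
        2 * LinearMap.trace R M ((p * f * (1 - p)) * ((1 - p) * f * p)) := by
  have corner_compl := mul_mul_self_mul_of_isIdempotentElem hp.one_sub f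
  rw [sub_sub_cancel] at corner_compl
  rw [trace_eq_add_of_isIdempotentElem hp, mul_mul_self_mul_of_isIdempotentElem hp, corner_compl,
    map_add, map_add, LinearMap.trace_mul_comm R ((1 - p) * f * p)]
  ring

end Idempotent

section Compression

variable {𝕜 E : Type*} [RCLike 𝕜] [NormedAddCommGroup E] [InnerProductSpace 𝕜 E]

/-- The compression `P_L ∘ A ∘ P_L` of an endomorphism `A` to a subspace `L`. It is taken as an
endomorphism of the whole space, vanishing on `Lᗮ`, rather than of `L`. -/
noncomputable def compression (L : Submodule 𝕜 E) [L.HasOrthogonalProjection] (A : End 𝕜 E) :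
    End 𝕜 E :=
  L.starProjection.toLinearMap ∘ₗ A ∘ₗ L.starProjection.toLinearMap

variable (L : Submodule 𝕜 E) [L.HasOrthogonalProjection]

theorem compression_eq_mul (A : End 𝕜 E) :
    compression L A = L.starProjection.toLinearMap * A * L.starProjection.toLinearMap :=
  rfl

theorem compression_orthogonal_eq_mul (A : End 𝕜 E) :
    compression Lᗮ A =
      (1 - L.starProjection.toLinearMap) * A * (1 - L.starProjection.toLinearMap) := by
  rw [compression_eq_mul, L.starProjection_orthogonal']
  rfl

theorem isSymmetric_compression {A : End 𝕜 E} (hA : A.IsSymmetric) :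
    (compression L A).IsSymmetric := fun x y => by
  simp only [compression, LinearMap.comp_apply, ContinuousLinearMap.coe_coe,
    L.inner_starProjection_left_eq_right, hA _ _]

theorem trace_eq_trace_compression_add (A : End 𝕜 E) :
    LinearMap.trace 𝕜 E A =
      LinearMap.trace 𝕜 E (compression L A) + LinearMap.trace 𝕜 E (compression Lᗮ A) := by
  rw [compression_eq_mul, compression_orthogonal_eq_mul]
  exact trace_eq_add_of_isIdempotentElem L.isSymmetricProjection_starProjection.isIdempotentElem A

theorem trace_starProjection [FiniteDimensional 𝕜 E] :
    LinearMap.trace 𝕜 E L.starProjection.toLinearMap = finrank 𝕜 L :=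
  LinearMap.IsProj.trace
    ⟨L.starProjection_apply_mem, fun _ => L.starProjection_eq_self_iff.mpr⟩

end Compression

section Real

variable {E : Type*} [NormedAddCommGroup E] [InnerProductSpace ℝ E] [FiniteDimensional ℝ E]

theorem trace_adjoint_mul_self_nonneg (T : End ℝ E) :
    0 ≤ LinearMap.trace ℝ E (T.adjoint * T) :=
  (LinearMap.isPositive_adjoint_comp_self T).trace_nonneg

theorem trace_mul_self_nonneg {T : End ℝ E} (hT : T.IsSymmetric) :
    0 ≤ LinearMap.trace ℝ E (T * T) := by
  simpa only [hT.adjoint_eq] using trace_adjoint_mul_self_nonneg T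

theorem sq_trace_mul_le {S T : End ℝ E} (hS : S.IsSymmetric) (hT : T.IsSymmetric) :
    LinearMap.trace ℝ E (S * T) ^ 2 ≤
      LinearMap.trace ℝ E (S * S) * LinearMap.trace ℝ E (T * T) := by
  have quadratic_nonneg (x : ℝ) : 0 ≤ LinearMap.trace ℝ E (S * S) * (x * x) +
      2 * LinearMap.trace ℝ E (S * T) * x + LinearMap.trace ℝ E (T * T) := by
    have h := trace_mul_self_nonneg ((hS.smul (conj_trivial x)).add hT)
    simp only [add_mul, mul_add, smul_mul_assoc, mul_smul_comm, map_add, map_smul, smul_eq_mul,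
      LinearMap.trace_mul_comm ℝ T S] at h
    linarith
  have h := discrim_le_zero quadratic_nonneg
  rw [discrim] at h
  linarith

variable (L : Submodule ℝ E) {A : End ℝ E}

theorem sq_trace_compression_le (hA : A.IsSymmetric) :
    LinearMap.trace ℝ E (compression L A) ^ 2 ≤
      finrank ℝ L * LinearMap.trace ℝ E (compression L A * compression L A) := by
  have hP : L.starProjection.toLinearMap * L.starProjection.toLinearMap =
      L.starProjection.toLinearMap := L.isSymmetricProjection_starProjection.isIdempotentElem
  have h := sq_trace_mul_le L.starProjection_isSymmetric (isSymmetric_compression L hA)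
  rwa [hP, trace_starProjection, compression_eq_mul, ← mul_assoc, ← mul_assoc, hP] at h

theorem trace_compression_mul_self_add_le (hA : A.IsSymmetric) :
    LinearMap.trace ℝ E (compression L A * compression L A) +
        LinearMap.trace ℝ E (compression Lᗮ A * compression Lᗮ A) ≤
      LinearMap.trace ℝ E (A * A) := by
  set P := L.starProjection.toLinearMap
  have adjoint_P : P.adjoint = P := L.starProjection_isSymmetric.adjoint_eq
  have adjoint_block : ((1 - P) * A * P).adjoint = P * A * (1 - P) := by
    simp only [← LinearMap.star_eq_adjoint, star_mul, star_sub, star_one] at adjoint_P ⊢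
    rw [adjoint_P, LinearMap.star_eq_adjoint, hA.adjoint_eq, mul_assoc]
  have off_diag_nonneg : 0 ≤ LinearMap.trace ℝ E (P * A * (1 - P) * ((1 - P) * A * P)) := by
    rw [← adjoint_block]
    exact trace_adjoint_mul_self_nonneg _
  have idem_P : IsIdempotentElem P := L.isSymmetricProjection_starProjection.isIdempotentElem
  rw [trace_mul_self_eq_of_isIdempotentElem idem_P A, compression_eq_mul,
    compression_orthogonal_eq_mul]
  linarith

theorem mul_mul_sq_trace_le (hA : A.IsSymmetric) {a b : ℝ} (ha : 0 ≤ a) (hb : 0 ≤ b) :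
    a * b * LinearMap.trace ℝ E A ^ 2 ≤
      (a + b) * (a * finrank ℝ L * LinearMap.trace ℝ E (compression L A * compression L A) +
        b * finrank ℝ Lᗮ * (LinearMap.trace ℝ E (A * A) -
          LinearMap.trace ℝ E (compression L A * compression L A))) := by
  have orthogonal_le : LinearMap.trace ℝ E (compression Lᗮ A * compression Lᗮ A) ≤
      LinearMap.trace ℝ E (A * A) - LinearMap.trace ℝ E (compression L A * compression L A) :=
    le_sub_iff_add_le'.mpr (trace_compression_mul_self_add_le L hA)
  set s := LinearMap.trace ℝ E (compression L A)
  set h := LinearMap.trace ℝ E (compression Lᗮ A)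
  calc a * b * LinearMap.trace ℝ E A ^ 2 = a * b * (s + h) ^ 2 := by
        rw [trace_eq_trace_compression_add L A]
    _ ≤ (a + b) * (a * s ^ 2 + b * h ^ 2) := by linarith [sq_nonneg (a * s - b * h)]
    _ ≤ _ := by
      rw [mul_assoc a, mul_assoc b]
      gcongr
      · exact sq_trace_compression_le L hA
      · exact (sq_trace_compression_le Lᗮ hA).trans (by gcongr)

theorem sq_trace_le_of_hyperplane (hA : A.IsSymmetric) {n : ℕ} (hn : 2 ≤ n)
    (hE : finrank ℝ E = n) (hL : finrank ℝ L = n - 1) {r : ℝ} (hr : 0 < r) :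
    LinearMap.trace ℝ E A ^ 2 ≤
      (n + r) * ((1 / n) * LinearMap.trace ℝ E (A * A)) -
        ((n - 1) * (n + r) * (r - n ^ 2 + n) / (r * n)) *
          ((1 / (n - 1 : ℝ)) *
            LinearMap.trace ℝ E (compression L A * compression L A)) := by
  have finrank_orthogonal : finrank ℝ Lᗮ = 1 := by
    have := L.finrank_add_finrank_orthogonal
    omega
  have hn_pos : (0 : ℝ) < n := by positivity
  have hn_sub_one : (n : ℝ) - 1 ≠ 0 := by
    have : (2 : ℝ) ≤ n := mod_cast hn
    linarith
  have key := mul_mul_sq_trace_le L hA hn_pos.le hr.le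
  rw [finrank_orthogonal, hL, Nat.cast_pred (by omega), Nat.cast_one] at key
  rw [← mul_le_mul_iff_right₀ (mul_pos hn_pos hr)]
  refine key.trans_eq ?_
  field_simp
  ring

theorem casorati_deltahat_ineq_general (hA : A.IsSymmetric) {n : ℕ} (hn : 2 ≤ n)
    (hE : finrank ℝ E = n) {r : ℝ} (hr : (n : ℝ) * (n - 1) ≤ r) :
    LinearMap.trace ℝ E A ^ 2 ≤
      (n + r) * ((1 / n) * LinearMap.trace ℝ E (A * A)) -
        ((n - 1) * (n + r) * (r - n ^ 2 + n) / (r * n)) *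
          sSup {c : ℝ | ∃ L : Submodule ℝ E, finrank ℝ L = n - 1 ∧
            c = (1 / (n - 1 : ℝ)) *
              LinearMap.trace ℝ E (compression L A * compression L A)} := by
  have hn_two : (2 : ℝ) ≤ n := mod_cast hn
  have hr_pos : 0 < r := by nlinarith
  have coeff_nonneg : 0 ≤ ((n : ℝ) - 1) * (n + r) * (r - n ^ 2 + n) / (r * n) := by
    have : 0 ≤ (n : ℝ) - 1 := by linarith
    have : 0 ≤ r - (n : ℝ) ^ 2 + n := by linarith
    positivity
  have : Nontrivial E := nontrivial_of_finrank_pos (R := ℝ) (by omega)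
  obtain ⟨L₀, hL₀⟩ := exists_submodule_finrank_add_one ℝ E
  rw [le_sub_comm, ← smul_eq_mul (_ / _), ← Real.sSup_smul_of_nonneg coeff_nonneg]
  refine csSup_le (Set.Nonempty.smul_set ⟨_, L₀, by omega, rfl⟩) ?_
  rintro _ ⟨_, ⟨L, hL, rfl⟩, rfl⟩
  exact le_sub_comm.mp (sq_trace_le_of_hyperplane L hA hn hE hL hr_pos)

end Real

/-- For `n ≥ 2`, `r > n(n-1)` and a self-adjoint endomorphism `A` of `ℝⁿ`,
with `C := (1/n)·tr(A²)` and `C(L) := (1/(n-1))·tr((P_L ∘ A ∘ P_L)²)` for each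
`(n-1)`-dimensional subspace `L` (where `P_L` is the orthogonal projection onto `L`),
`(tr A)² ≤ (n+r)·C − ((n-1)(n+r)(r−n²+n)/(rn))·sup { C(L) }`. -/
theorem casorati_deltahat_ineq (n : ℕ) (hn : 2 ≤ n) (r : ℝ)
    (hr : (n : ℝ) * (n - 1) < r)
    (A : EuclideanSpace ℝ (Fin n) →ₗ[ℝ] EuclideanSpace ℝ (Fin n))
    (hA : ∀ x y : EuclideanSpace ℝ (Fin n),
      inner ℝ (A x) y = (inner ℝ x (A y) : ℝ)) :
    (LinearMap.trace ℝ _ A) ^ 2 ≤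
      (n + r) * ((1 / n) * LinearMap.trace ℝ _ (A ∘ₗ A))
        - ((n - 1) * (n + r) * (r - n ^ 2 + n) / (r * n)) *
            sSup { c : ℝ | ∃ L : Submodule ℝ (EuclideanSpace ℝ (Fin n)),
              Module.finrank ℝ L = n - 1 ∧
              c = (1 / (n - 1 : ℝ)) *
                LinearMap.trace ℝ _
                  (((L.subtypeL.comp (Submodule.orthogonalProjectionOnto L)).toLinearMap ∘ₗ A ∘ₗ
                      (L.subtypeL.comp (Submodule.orthogonalProjectionOnto L)).toLinearMap) ∘ₗ
                   ((L.subtypeL.comp (Submodule.orthogonalProjectionOnto L)).toLinearMap ∘ₗ A ∘ₗ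
                      (L.subtypeL.comp (Submodule.orthogonalProjectionOnto L)).toLinearMap)) } := by
  exact casorati_deltahat_ineq_general hA hn finrank_euclideanSpace_fin hr.le
end

section
/- Let n ≥ 2 be an integer. For every symmetric real n×n matrix h = (h_{ij}) one has (∑_{i=1}^n h_{ii})² ≤ ((2n−1)/2)·(2·∑_{i,j=1}^n h_{ij}² − ∑_{i,j=1}^{n−1} h_{ij}²), and equality holds if and only if there exists a real number a such that h_{ij} = 0 for all i ≠ j, h_{11} = ⋯ = h_{n−1,n−1} = 2a, and h_{nn} = a. -/
/-! Up to the factor `(2n - 1) / 2`, the right-hand side is a weighted sum of the squares of the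
entries of `h`, with weight `2` on the last row and column and `1` elsewhere. Dropping the
off-diagonal squares leaves Sedrakyan's form of the Cauchy–Schwarz inequality on the diagonal, and
`(2n - 1) / 2 = (n - 1) + 1 / 2` is the sum of the inverses of the diagonal weights. -/

open Finset

section Sedrakyan

variable {ι 𝕜 : Type*} [Field 𝕜]

theorem sum_sq_div_sub_sq_sum_div (s : Finset ι) (x : ι → 𝕜) {g : ι → 𝕜}
    (hg : ∀ i ∈ s, g i ≠ 0) :
    ∑ i ∈ s, x i ^ 2 / g i - (∑ i ∈ s, x i) ^ 2 / ∑ i ∈ s, g i =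
      ∑ i ∈ s, (x i - (∑ j ∈ s, x j) / (∑ j ∈ s, g j) * g i) ^ 2 / g i := by
  by_cases hG : ∑ i ∈ s, g i = 0
  · simp only [hG, div_zero, zero_mul, sub_zero]
  set t := (∑ i ∈ s, x i) / ∑ i ∈ s, g i with ht
  have expand : ∀ i ∈ s, (x i - t * g i) ^ 2 / g i =
      x i ^ 2 / g i - 2 * t * x i + t ^ 2 * g i := fun i hi => by
    have := hg i hi
    field_simp
    ring
  rw [sum_congr rfl expand, sum_add_distrib, sum_sub_distrib, ← mul_sum, ← mul_sum, ht]
  field_simp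
  ring

theorem sq_sum_div_eq_sum_sq_div_iff [LinearOrder 𝕜] [IsStrictOrderedRing 𝕜] (s : Finset ι)
    (x : ι → 𝕜) {g : ι → 𝕜} (hg : ∀ i ∈ s, 0 < g i) :
    (∑ i ∈ s, x i) ^ 2 / ∑ i ∈ s, g i = ∑ i ∈ s, x i ^ 2 / g i ↔
      ∃ a, ∀ i ∈ s, x i = a * g i := by
  constructor
  · intro heq
    have hdefect := sum_sq_div_sub_sq_sum_div s x fun i hi => (hg i hi).ne'
    rw [heq, sub_self, eq_comm,
      sum_eq_zero_iff_of_nonneg fun i hi => div_nonneg (sq_nonneg _) (hg i hi).le] at hdefect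
    refine ⟨(∑ j ∈ s, x j) / ∑ j ∈ s, g j, fun i hi => ?_⟩
    simpa [(hg i hi).ne', sub_eq_zero] using hdefect i hi
  · rintro ⟨a, ha⟩
    have hterm : ∀ i ∈ s, x i ^ 2 / g i = a ^ 2 * g i := fun i hi => by
      rw [ha i hi, mul_pow, sq (g i), mul_div_assoc, mul_self_div_self]
    rw [sum_congr rfl ha, sum_congr rfl hterm, ← mul_sum, ← mul_sum, mul_pow, sq (∑ i ∈ s, g i),
      mul_div_assoc, mul_self_div_self]

end Sedrakyan

section SumOfEntries

variable {ι M : Type*} [Fintype ι] [AddCommMonoid M] [PartialOrder M] {A : ι → ι → M}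

theorem sum_diag_le_sum [IsOrderedAddMonoid M] (hA : ∀ i j, 0 ≤ A i j) :
    ∑ i, A i i ≤ ∑ i, ∑ j, A i j :=
  sum_le_sum fun i _ => single_le_sum (fun j _ => hA i j) (mem_univ i)

theorem sum_diag_eq_sum_iff [IsOrderedCancelAddMonoid M] (hA : ∀ i j, 0 ≤ A i j) :
    ∑ i, A i i = ∑ i, ∑ j, A i j ↔ ∀ i j, i ≠ j → A i j = 0 := by
  classical
  have hrow : ∀ i, A i i = ∑ j, A i j ↔ ∀ j, i ≠ j → A i j = 0 := fun i => by
    rw [← add_sum_erase _ _ (mem_univ i), left_eq_add, sum_eq_zero_iff_of_nonneg fun j _ => hA i j]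
    simp only [mem_erase, mem_univ, and_true, ne_comm]
  simp only [← hrow]
  exact (sum_eq_sum_iff_of_le fun i _ => single_le_sum (fun j _ => hA i j) (mem_univ i)).trans
    (by simp only [mem_univ, true_imp_iff])

end SumOfEntries

section WeightedTrace

variable {ι 𝕜 : Type*} [Fintype ι] [Field 𝕜] [LinearOrder 𝕜] [IsStrictOrderedRing 𝕜]
  {W : Matrix ι ι 𝕜}

theorem sq_trace_div_sum_inv_le_sum_diag (hW : ∀ i, 0 < W i i) (h : Matrix ι ι 𝕜) :
    h.trace ^ 2 / ∑ i, (W i i)⁻¹ ≤ ∑ i, W i i * h i i ^ 2 := by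
  simpa only [div_inv_eq_mul, mul_comm, Matrix.trace, Matrix.diag_apply] using
    sq_sum_div_le_sum_sq_div univ h.diag fun i _ => inv_pos.2 (hW i)

theorem sq_trace_div_sum_inv_eq_sum_diag_iff (hW : ∀ i, 0 < W i i) (h : Matrix ι ι 𝕜) :
    h.trace ^ 2 / ∑ i, (W i i)⁻¹ = ∑ i, W i i * h i i ^ 2 ↔
      ∃ a, ∀ i, h i i = a * (W i i)⁻¹ := by
  simpa only [div_inv_eq_mul, mul_comm, Matrix.trace, Matrix.diag_apply, mem_univ,
    true_imp_iff] using sq_sum_div_eq_sum_sq_div_iff univ h.diag fun i _ => inv_pos.2 (hW i)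

theorem sum_diag_weighted_sq_le_sum (hW : ∀ i j, 0 ≤ W i j) (h : Matrix ι ι 𝕜) :
    ∑ i, W i i * h i i ^ 2 ≤ ∑ i, ∑ j, W i j * h i j ^ 2 :=
  sum_diag_le_sum fun i j => mul_nonneg (hW i j) (sq_nonneg _)

theorem sum_diag_weighted_sq_eq_sum_iff (hW : ∀ i j, 0 < W i j) (h : Matrix ι ι 𝕜) :
    ∑ i, W i i * h i i ^ 2 = ∑ i, ∑ j, W i j * h i j ^ 2 ↔ ∀ i j, i ≠ j → h i j = 0 :=
  (sum_diag_eq_sum_iff fun i j => mul_nonneg (hW i j).le (sq_nonneg (h i j))).trans <| by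
    simp only [mul_eq_zero, (hW _ _).ne', false_or, sq_eq_zero_iff]

theorem sq_trace_div_sum_inv_le_sum (hdiag : ∀ i, 0 < W i i) (hW : ∀ i j, 0 ≤ W i j)
    (h : Matrix ι ι 𝕜) :
    h.trace ^ 2 / ∑ i, (W i i)⁻¹ ≤ ∑ i, ∑ j, W i j * h i j ^ 2 :=
  (sq_trace_div_sum_inv_le_sum_diag hdiag h).trans (sum_diag_weighted_sq_le_sum hW h)

theorem sq_trace_div_sum_inv_eq_sum_iff (hW : ∀ i j, 0 < W i j) (h : Matrix ι ι 𝕜) :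
    h.trace ^ 2 / ∑ i, (W i i)⁻¹ = ∑ i, ∑ j, W i j * h i j ^ 2 ↔
      ∃ a, (∀ i j, i ≠ j → h i j = 0) ∧ ∀ i, h i i = a * (W i i)⁻¹ := by
  have hdiag := sq_trace_div_sum_inv_le_sum_diag (fun i => hW i i) h
  have hoff := sum_diag_weighted_sq_le_sum (fun i j => (hW i j).le) h
  rw [exists_and_left, ← sum_diag_weighted_sq_eq_sum_iff hW,
    ← sq_trace_div_sum_inv_eq_sum_diag_iff fun i => hW i i]
  exact ⟨fun heq => ⟨hoff.antisymm (heq ▸ hdiag), hdiag.antisymm (heq ▸ hoff)⟩,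
    fun ⟨hoff_eq, hdiag_eq⟩ => hdiag_eq.trans hoff_eq⟩

end WeightedTrace

section CasoratiWeight

variable {ι : Type*} [DecidableEq ι]

/-- The coefficients of the squared entries in the quadratic form
`2 * ∑ i, ∑ j, h i j ^ 2 - ∑ i ∈ {k}ᶜ, ∑ j ∈ {k}ᶜ, h i j ^ 2`; the index `k` stands for the normal
direction of the hyperplane, which is `n` in the corollary on `δ̂_c(n - 1)`. -/
def casoratiWeight (R : Type*) [NatCast R] [One R] (k : ι) : Matrix ι ι R :=
  .of fun i j => if i = k ∨ j = k then 2 else 1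

theorem casoratiWeight_diag {R : Type*} [NatCast R] [One R] (k i : ι) :
    casoratiWeight R k i i = if i = k then 2 else 1 := by
  simp only [casoratiWeight, Matrix.of_apply, or_self]

theorem casoratiWeight_pos {R : Type*} [Semiring R] [PartialOrder R] [IsStrictOrderedRing R]
    (k i j : ι) : 0 < casoratiWeight R k i j := by
  simp only [casoratiWeight, Matrix.of_apply]
  split_ifs
  exacts [two_pos, one_pos]

theorem forall_eq_mul_inv_casoratiWeight_iff {𝕜 : Type*} [Field 𝕜] [NeZero (2 : 𝕜)] (k : ι)
    (x : ι → 𝕜) (a : 𝕜) :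
    (∀ i, x i = 2 * a * (casoratiWeight 𝕜 k i i)⁻¹) ↔ (∀ i, i ≠ k → x i = 2 * a) ∧ x k = a := by
  have hk : 2 * a * (casoratiWeight 𝕜 k k k)⁻¹ = a := by
    rw [casoratiWeight_diag, if_pos rfl, mul_right_comm, mul_inv_cancel₀ two_ne_zero, one_mul]
  have hne : ∀ i, i ≠ k → 2 * a * (casoratiWeight 𝕜 k i i)⁻¹ = 2 * a := fun i hi => by
    rw [casoratiWeight_diag, if_neg hi, inv_one, mul_one]
  constructor
  · exact fun hx => ⟨fun i hi => (hx i).trans (hne i hi), (hx k).trans hk⟩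
  · rintro ⟨hxne, hxk⟩ i
    obtain rfl | hi := eq_or_ne i k
    exacts [hxk.trans hk.symm, (hxne i hi).trans (hne i hi).symm]

variable [Fintype ι]

theorem sum_casoratiWeight_mul {R : Type*} [Ring R] (k : ι) (A : ι → ι → R) :
    ∑ i, ∑ j, casoratiWeight R k i j * A i j =
      2 * ∑ i, ∑ j, A i j - ∑ i ∈ {k}ᶜ, ∑ j ∈ {k}ᶜ, A i j := by
  have hcompl : ∀ f : ι → R, ∑ i ∈ {k}ᶜ, f i = ∑ i, if i = k then 0 else f i := fun f => by
    rw [Fintype.sum_eq_add_sum_compl k, if_pos rfl, zero_add]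
    exact sum_congr rfl fun i hi => (if_neg (by simpa using hi)).symm
  have hblock : ∑ i ∈ {k}ᶜ, ∑ j ∈ {k}ᶜ, A i j =
      ∑ i, ∑ j, if i = k ∨ j = k then 0 else A i j := by
    rw [hcompl]
    refine sum_congr rfl fun i _ => ?_
    split_ifs with hi
    · simp only [hi, true_or, if_true, sum_const_zero]
    · simp only [hi, false_or, hcompl]
  rw [hblock]
  simp only [mul_sum, ← sum_sub_distrib]
  refine sum_congr rfl fun i _ => sum_congr rfl fun j _ => ?_
  simp only [casoratiWeight, Matrix.of_apply]
  split_ifs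
  · rw [sub_zero]
  · rw [one_mul, two_mul, add_sub_cancel_right]

theorem sum_inv_casoratiWeight_diag {𝕜 : Type*} [Field 𝕜] [NeZero (2 : 𝕜)] (k : ι) :
    ∑ i, (casoratiWeight 𝕜 k i i)⁻¹ = (2 * Fintype.card ι - 1) / 2 := by
  have hterm : ∀ i, (casoratiWeight 𝕜 k i i)⁻¹ = 1 - if i = k then 2⁻¹ else 0 := fun i => by
    rw [casoratiWeight_diag]
    split_ifs
    · field_simp
      norm_num
    · rw [inv_one, sub_zero]
  simp only [hterm, sum_sub_distrib, sum_const, card_univ, nsmul_one, sum_ite_eq', mem_univ,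
    if_true]
  field_simp

end CasoratiWeight

theorem sum_castLE_pred_eq_sum_compl_last {n : ℕ} (hn : 0 < n) {M : Type*} [AddCommMonoid M]
    (f : Fin n → M) :
    ∑ i : Fin (n - 1), f (i.castLE (Nat.sub_le n 1)) =
      ∑ i ∈ {⟨n - 1, Nat.sub_one_lt_of_lt hn⟩}ᶜ, f i := by
  obtain ⟨m, rfl⟩ := Nat.exists_eq_succ_of_ne_zero hn.ne'
  exact (sum_image (Fin.castSucc_injective m).injOn).symm.trans
    (congrArg (fun s => ∑ i ∈ s, f i) (Fin.image_castSucc m))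

theorem lt_pred_iff_ne_last {n : ℕ} (hn : 0 < n) (i : Fin n) :
    (i : ℕ) < n - 1 ↔ i ≠ ⟨n - 1, Nat.sub_one_lt_of_lt hn⟩ := by
  have := i.isLt
  simp only [ne_eq, Fin.ext_iff]
  omega

theorem casorati_normalized_deltahat_general {ι 𝕜 : Type*} [Fintype ι] [DecidableEq ι] [Field 𝕜]
    [LinearOrder 𝕜] [IsStrictOrderedRing 𝕜] (k : ι) (h : Matrix ι ι 𝕜) :
    h.trace ^ 2 ≤ (2 * Fintype.card ι - 1) / 2 *
        (2 * ∑ i, ∑ j, h i j ^ 2 - ∑ i ∈ {k}ᶜ, ∑ j ∈ {k}ᶜ, h i j ^ 2) ∧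
      (h.trace ^ 2 = (2 * Fintype.card ι - 1) / 2 *
          (2 * ∑ i, ∑ j, h i j ^ 2 - ∑ i ∈ {k}ᶜ, ∑ j ∈ {k}ᶜ, h i j ^ 2) ↔
        ∃ a, (∀ i j, i ≠ j → h i j = 0) ∧ (∀ i, i ≠ k → h i i = 2 * a) ∧ h k k = a) := by
  have hpos := casoratiWeight_pos (R := 𝕜) k
  have hsum : 0 < ∑ i, (casoratiWeight 𝕜 k i i)⁻¹ :=
    sum_pos (fun i _ => inv_pos.2 (hpos i i)) ⟨k, mem_univ k⟩
  rw [← sum_casoratiWeight_mul, ← sum_inv_casoratiWeight_diag k, mul_comm (∑ i, _),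
    ← div_le_iff₀ hsum, ← div_eq_iff hsum.ne', sq_trace_div_sum_inv_eq_sum_iff hpos,
    (mul_left_surjective₀ (two_ne_zero (α := 𝕜))).exists]
  exact ⟨sq_trace_div_sum_inv_le_sum (fun i => hpos i i) (fun i j => (hpos i j).le) h,
    by simp only [forall_eq_mul_inv_casoratiWeight_iff k fun i => h i i]⟩

/-- For `n ≥ 2` and a symmetric real `n × n` matrix `h`,
`(∑ i, h i i)² ≤ ((2n−1)/2)·(2·∑_{i,j} h_{ij}² − ∑_{i,j ≤ n-1} h_{ij}²)`, with equality iff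
`h` is diagonal with `h_{11} = ⋯ = h_{n-1,n-1} = 2a` and `h_{nn} = a` for some real `a`. -/
theorem casorati_normalized_deltahat (n : ℕ) (hn : 2 ≤ n)
    (h : Matrix (Fin n) (Fin n) ℝ) (hsym : h.IsSymm) :
    (∑ i, h i i) ^ 2 ≤
      ((2 * n - 1) / 2 : ℝ) *
        (2 * ∑ i, ∑ j, (h i j) ^ 2
          - ∑ i : Fin (n - 1), ∑ j : Fin (n - 1),
              (h (Fin.castLE (by omega) i) (Fin.castLE (by omega) j)) ^ 2)
    ∧ ((∑ i, h i i) ^ 2 =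
        ((2 * n - 1) / 2 : ℝ) *
          (2 * ∑ i, ∑ j, (h i j) ^ 2
            - ∑ i : Fin (n - 1), ∑ j : Fin (n - 1),
                (h (Fin.castLE (by omega) i) (Fin.castLE (by omega) j)) ^ 2)
      ↔ ∃ a : ℝ,
          (∀ i j : Fin n, i ≠ j → h i j = 0) ∧
          (∀ i : Fin n, (i : ℕ) < n - 1 → h i i = 2 * a) ∧
          h ⟨n - 1, by omega⟩ ⟨n - 1, by omega⟩ = a) := by
  have hpos : 0 < n := by omega
  have hgeneral := casorati_normalized_deltahat_general (⟨n - 1, by omega⟩ : Fin n) h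
  simpa only [← sum_castLE_pred_eq_sum_compl_last hpos, ← lt_pred_iff_ne_last hpos,
    Matrix.trace, Matrix.diag_apply, Fintype.card_fin] using hgeneral
end

section
/- Let m ≥ 1, let V be a real inner product space of dimension 4m, let J be an orthogonal complex structure on V (a linear isometry with J² = −id), and let (J₁, J₂, J₃) be a quaternionic Hermitian triple on V (linear isometries with J_α² = −id and J₁∘J₂ = J₃ = −J₂∘J₁, J₂∘J₃ = J₁ = −J₃∘J₂, J₃∘J₁ = J₂ = −J₁∘J₃) such that J∘J_α = J_α∘J for α = 1, 2, 3. Let e ∈ V be a unit vector, set n = 4m − 1, and let (e₁,…,e_n) be an orthonormal basis of the orthogonal complement of e in V. Then 3·∑_{i,j=1}^n ⟨e_i, J e_j⟩² + ∑_{α=1}^3 [ 3·∑_{i,j=1}^n ⟨e_i, J_α e_j⟩² + (∑_{i=1}^n ⟨e_i, J_α J e_i⟩)·(∑_{j=1}^n ⟨e_j, J_α J e_j⟩) − ∑_{i,j=1}^n ⟨e_i, J_α J e_j⟩² ] = 9(n − 1). -/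
open scoped RealInnerProductSpace

/-!
The double sum of a linear isometry `K` over an orthonormal basis of `eᗮ` is a Parseval
computation: each `K bⱼ` has norm one and only its component along `e` is lost, so the sum is
`n - 1 + ⟪e, K e⟫²`. For a complex structure the last term vanishes by skew-symmetry. For
`K = J_α J` it is cancelled by the square of the trace over `eᗮ`: since `J_α J` is traceless
on `V`, that trace is `-⟪e, K e⟫`. Tracelessness holds because conjugation by `J_β`, `β ≠ α`,
turns `J_α J` into `-J_α J`. Each `α` thus contributes `2 (n - 1)`.
-/

section Trace

variable {R M : Type*} [CommRing R] [IsAddTorsionFree R] [AddCommGroup M] [Module R M]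

theorem trace_eq_zero_of_anticommute_unit {K : M →ₗ[R] M} (u : (M →ₗ[R] M)ˣ)
    (h : ↑u * K = -(K * ↑u)) : LinearMap.trace R M K = 0 := by
  rw [← self_eq_neg, ← map_neg]
  calc LinearMap.trace R M K
    _ = LinearMap.trace R M (↑u * K * ↑u⁻¹) := (LinearMap.trace_conj R K u).symm
    _ = LinearMap.trace R M (-K) := by rw [h, neg_mul, Units.mul_inv_cancel_right]

theorem trace_comp_eq_zero_of_anticommute {A B J : M →ₗ[R] M} (hB : IsUnit B)
    (hBA : B ∘ₗ A = -(A ∘ₗ B)) (hJB : J ∘ₗ B = B ∘ₗ J) :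
    LinearMap.trace R M (A ∘ₗ J) = 0 := by
  obtain ⟨u, rfl⟩ := hB
  refine trace_eq_zero_of_anticommute_unit u ?_
  simp only [Module.End.mul_eq_comp]
  rw [← LinearMap.comp_assoc, hBA, LinearMap.neg_comp, LinearMap.comp_assoc, ← hJB,
    LinearMap.comp_assoc]

end Trace

section OrthogonalComplementOfUnitVector

open scoped InnerProductSpace

variable {𝕜 V ι : Type*} [RCLike 𝕜] [NormedAddCommGroup V] [InnerProductSpace 𝕜 V] [Fintype ι]
  {e : V}

theorem exists_orthonormalBasis_option (he : ‖e‖ = 1)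
    (b : OrthonormalBasis ι 𝕜 (𝕜 ∙ e)ᗮ) :
    ∃ c : OrthonormalBasis (Option ι) 𝕜 V, c none = e ∧ ∀ i, c (some i) = b i := by
  classical
  let v : Option ι → V := fun o ↦ o.elim e fun i ↦ b i
  have he_b (i : ι) : ⟪e, (b i : V)⟫_𝕜 = 0 :=
    Submodule.mem_orthogonal_singleton_iff_inner_right.1 (b i).2
  have hb_e (i : ι) : ⟪(b i : V), e⟫_𝕜 = 0 :=
    Submodule.mem_orthogonal_singleton_iff_inner_left.1 (b i).2
  have hv : Orthonormal 𝕜 v := by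
    rw [orthonormal_iff_ite]
    rintro (_ | i) (_ | j)
    · simp [v, he]
    · simp [v, he_b]
    · simp [v, hb_e]
    · simpa [v] using orthonormal_iff_ite.1 b.orthonormal i j
  have hspan : (Submodule.span 𝕜 (Set.range v))ᗮ = ⊥ := by
    refine (Submodule.eq_bot_iff _).2 fun x hx ↦ ?_
    have hvx (o : Option ι) : ⟪v o, x⟫_𝕜 = 0 := hx _ (Submodule.subset_span ⟨o, rfl⟩)
    have hx_mem : x ∈ (𝕜 ∙ e)ᗮ :=
      Submodule.mem_orthogonal_singleton_iff_inner_right.2 (hvx none)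
    have hx_zero : (⟨x, hx_mem⟩ : (𝕜 ∙ e)ᗮ) = 0 :=
      InnerProductSpace.ext_inner_left_basis b.toBasis fun i ↦ by simpa [v] using hvx (some i)
    exact congrArg Subtype.val hx_zero
  exact ⟨OrthonormalBasis.mkOfOrthogonalEqBot hv hspan, by simp [v], by simp [v]⟩

theorem sum_sq_norm_inner_orthogonal_singleton (he : ‖e‖ = 1)
    (b : OrthonormalBasis ι 𝕜 (𝕜 ∙ e)ᗮ) (x : V) :
    ∑ i, ‖⟪(b i : V), x⟫_𝕜‖ ^ 2 = ‖x‖ ^ 2 - ‖⟪e, x⟫_𝕜‖ ^ 2 := by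
  obtain ⟨c, hc_none, hc_some⟩ := exists_orthonormalBasis_option he b
  have parseval := c.sum_sq_norm_inner_right x
  simp only [Fintype.sum_option, hc_none, hc_some] at parseval
  exact eq_sub_of_add_eq' parseval

theorem sum_inner_orthogonal_singleton_eq_trace_sub (he : ‖e‖ = 1)
    (b : OrthonormalBasis ι 𝕜 (𝕜 ∙ e)ᗮ) (K : V →ₗ[𝕜] V) :
    ∑ i, ⟪(b i : V), K (b i)⟫_𝕜 = LinearMap.trace 𝕜 V K - ⟪e, K e⟫_𝕜 := by
  obtain ⟨c, hc_none, hc_some⟩ := exists_orthonormalBasis_option he b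
  have htrace := K.trace_eq_sum_inner c
  simp only [Fintype.sum_option, hc_none, hc_some] at htrace
  exact eq_sub_of_add_eq' htrace.symm

theorem sum_sum_sq_norm_inner_linearIsometry (he : ‖e‖ = 1)
    (b : OrthonormalBasis ι 𝕜 (𝕜 ∙ e)ᗮ) (K : V →ₗᵢ[𝕜] V) :
    ∑ i, ∑ j, ‖⟪(b i : V), K (b j)⟫_𝕜‖ ^ 2 = Fintype.card ι - 1 + ‖⟪e, K e⟫_𝕜‖ ^ 2 := by
  obtain ⟨c, -, -⟩ := exists_orthonormalBasis_option he b
  have : FiniteDimensional 𝕜 V := c.toBasis.finiteDimensional_of_finite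
  let L : V ≃ₗᵢ[𝕜] V := K.toLinearIsometryEquiv rfl
  have norm_inner_symm_e (x : V) : ‖⟪x, L.symm e⟫_𝕜‖ = ‖⟪e, K x⟫_𝕜‖ := by
    rw [← L.inner_map_map, L.apply_symm_apply, norm_inner_symm]
    rfl
  have norm_map_b (j : ι) : ‖K (b j)‖ = 1 := by
    rw [K.norm_map, ← Submodule.coe_norm, b.norm_eq_one]
  calc ∑ i, ∑ j, ‖⟪(b i : V), K (b j)⟫_𝕜‖ ^ 2
    _ = ∑ j, (1 - ‖⟪e, K (b j)⟫_𝕜‖ ^ 2) := by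
      rw [Finset.sum_comm]
      simp only [sum_sq_norm_inner_orthogonal_singleton he, norm_map_b, one_pow]
    _ = Fintype.card ι - ∑ j, ‖⟪(b j : V), L.symm e⟫_𝕜‖ ^ 2 := by
      simp [norm_inner_symm_e]
    _ = Fintype.card ι - 1 + ‖⟪e, K e⟫_𝕜‖ ^ 2 := by
      rw [sum_sq_norm_inner_orthogonal_singleton he, norm_inner_symm_e, L.symm.norm_map, he]
      ring

end OrthogonalComplementOfUnitVector

section ComplexStructure

variable {V : Type*} [NormedAddCommGroup V] [InnerProductSpace ℝ V]

/-- An orthogonal complex structure on a real inner product space: a linear map that preserves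
the inner product and squares to `-id`. It is stated for unbundled linear
maps because these maps are composed and traced as endomorphisms. -/
structure IsOrthogonalComplexStructure (J : V →ₗ[ℝ] V) : Prop where
  inner_map_map : ∀ x y : V, ⟪J x, J y⟫ = ⟪x, y⟫
  comp_self : J ∘ₗ J = -LinearMap.id

namespace IsOrthogonalComplexStructure

variable {ι : Type*} [Fintype ι] {e : V} {A J : V →ₗ[ℝ] V}

theorem isUnit (hJ : IsOrthogonalComplexStructure J) : IsUnit J := by
  have hsq : J ^ 2 = -1 := (pow_two J).trans hJ.comp_self
  rw [← isUnit_pow_iff two_ne_zero, hsq]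
  exact isUnit_one.neg

theorem inner_self_map_eq_zero (hJ : IsOrthogonalComplexStructure J) (x : V) :
    ⟪x, J x⟫ = 0 := by
  have hJJ : J (J x) = -x := LinearMap.congr_fun hJ.comp_self x
  rw [← self_eq_neg]
  calc ⟪x, J x⟫
    _ = ⟪J x, J (J x)⟫ := (hJ.inner_map_map _ _).symm
    _ = -⟪x, J x⟫ := by rw [hJJ, inner_neg_right, real_inner_comm]

theorem sum_sum_sq_inner (hJ : IsOrthogonalComplexStructure J) (he : ‖e‖ = 1)
    (b : OrthonormalBasis ι ℝ (ℝ ∙ e)ᗮ) :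
    ∑ i, ∑ j, ⟪(b i : V), J (b j)⟫ ^ 2 = (Fintype.card ι : ℝ) - 1 := by
  simpa [hJ.inner_self_map_eq_zero] using
    sum_sum_sq_norm_inner_linearIsometry he b (J.isometryOfInner hJ.inner_map_map)

theorem contraction_of_trace_comp_eq_zero (hA : IsOrthogonalComplexStructure A)
    (hJ : IsOrthogonalComplexStructure J) (htrace : LinearMap.trace ℝ V (A ∘ₗ J) = 0)
    (he : ‖e‖ = 1) (b : OrthonormalBasis ι ℝ (ℝ ∙ e)ᗮ) :
    3 * (∑ i, ∑ j, ⟪(b i : V), A (b j)⟫ ^ 2)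
        + (∑ i, ⟪(b i : V), A (J (b i))⟫) * (∑ j, ⟪(b j : V), A (J (b j))⟫)
        - ∑ i, ∑ j, ⟪(b i : V), A (J (b j))⟫ ^ 2
      = 2 * ((Fintype.card ι : ℝ) - 1) := by
  have hsum : ∑ i, ⟪(b i : V), A (J (b i))⟫ = -⟪e, A (J e)⟫ := by
    simpa [htrace] using sum_inner_orthogonal_singleton_eq_trace_sub he b (A ∘ₗ J)
  have hsum_sq : ∑ i, ∑ j, ⟪(b i : V), A (J (b j))⟫ ^ 2
      = (Fintype.card ι : ℝ) - 1 + ⟪e, A (J e)⟫ ^ 2 := by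
    simpa using sum_sum_sq_norm_inner_linearIsometry he b
      ((A.isometryOfInner hA.inner_map_map).comp (J.isometryOfInner hJ.inner_map_map))
  rw [hA.sum_sum_sq_inner he b, hsum, hsum_sq]
  ring

end IsOrthogonalComplexStructure

theorem curvature_contraction_eq_general {ι κ : Type*} [Fintype ι] [Fintype κ]
    {J : V →ₗ[ℝ] V} (hJ : IsOrthogonalComplexStructure J)
    {A : κ → V →ₗ[ℝ] V} (hA : ∀ α, IsOrthogonalComplexStructure (A α))
    (htrace : ∀ α, LinearMap.trace ℝ V (A α ∘ₗ J) = 0)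
    {e : V} (he : ‖e‖ = 1) (b : OrthonormalBasis ι ℝ (ℝ ∙ e)ᗮ) :
    3 * (∑ i, ∑ j, ⟪(b i : V), J (b j)⟫ ^ 2)
      + ∑ α, (3 * (∑ i, ∑ j, ⟪(b i : V), A α (b j)⟫ ^ 2)
          + (∑ i, ⟪(b i : V), A α (J (b i))⟫) * (∑ j, ⟪(b j : V), A α (J (b j))⟫)
          - ∑ i, ∑ j, ⟪(b i : V), A α (J (b j))⟫ ^ 2)
      = (3 + 2 * Fintype.card κ) * ((Fintype.card ι : ℝ) - 1) := by
  simp only [hJ.sum_sum_sq_inner he b,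
    (hA _).contraction_of_trace_comp_eq_zero hJ (htrace _) he b, Finset.sum_const,
    Finset.card_univ, nsmul_eq_mul]
  ring

end ComplexStructure

/-- With `dim V = 4m` (`m ≥ 1`), `J` an orthogonal complex structure and
`(J₁, J₂, J₃)` a quaternionic Hermitian triple on `V` commuting with `J`, `e` a unit
vector, `n = 4m − 1` and `(e₁,…,e_n)` an orthonormal basis of the orthogonal complement
of `e`, the full contraction of the curvature correction terms equals `9(n − 1)`:
`3 ∑_{i,j} ⟨e_i, J e_j⟩² + ∑_{α=1}^{3} [ 3 ∑_{i,j} ⟨e_i, J_α e_j⟩²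
  + (∑_i ⟨e_i, J_α J e_i⟩)(∑_j ⟨e_j, J_α J e_j⟩) − ∑_{i,j} ⟨e_i, J_α J e_j⟩² ] = 9(n−1)`. -/
theorem curvature_contraction_eq
    (m : ℕ) (hm : 1 ≤ m)
    (V : Type*) [NormedAddCommGroup V] [InnerProductSpace ℝ V]
    (hdim : Module.finrank ℝ V = 4 * m)
    (J J₁ J₂ J₃ : V →ₗ[ℝ] V)
    (hJiso : ∀ x y : V, ⟪J x, J y⟫ = ⟪x, y⟫)
    (hJsq : J ∘ₗ J = -LinearMap.id)
    (hJ₁iso : ∀ x y : V, ⟪J₁ x, J₁ y⟫ = ⟪x, y⟫)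
    (hJ₂iso : ∀ x y : V, ⟪J₂ x, J₂ y⟫ = ⟪x, y⟫)
    (hJ₃iso : ∀ x y : V, ⟪J₃ x, J₃ y⟫ = ⟪x, y⟫)
    (hJ₁sq : J₁ ∘ₗ J₁ = -LinearMap.id)
    (hJ₂sq : J₂ ∘ₗ J₂ = -LinearMap.id)
    (hJ₃sq : J₃ ∘ₗ J₃ = -LinearMap.id)
    (h12 : J₁ ∘ₗ J₂ = J₃) (h21 : J₂ ∘ₗ J₁ = -J₃)
    (h23 : J₂ ∘ₗ J₃ = J₁) (h32 : J₃ ∘ₗ J₂ = -J₁)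
    (h31 : J₃ ∘ₗ J₁ = J₂) (h13 : J₁ ∘ₗ J₃ = -J₂)
    (hc1 : J ∘ₗ J₁ = J₁ ∘ₗ J)
    (hc2 : J ∘ₗ J₂ = J₂ ∘ₗ J)
    (hc3 : J ∘ₗ J₃ = J₃ ∘ₗ J)
    (e : V) (he : ‖e‖ = 1)
    (n : ℕ) (hn : n = 4 * m - 1)
    (b : OrthonormalBasis (Fin n) ℝ ((ℝ ∙ e)ᗮ : Submodule ℝ V)) :
    3 * (∑ i, ∑ j, ⟪(b i : V), J (b j : V)⟫ ^ 2)
      + ∑ α : Fin 3,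
          (3 * (∑ i, ∑ j, ⟪(b i : V), (![J₁, J₂, J₃] α) (b j : V)⟫ ^ 2)
            + (∑ i, ⟪(b i : V), (![J₁, J₂, J₃] α) (J (b i : V))⟫)
                * (∑ j, ⟪(b j : V), (![J₁, J₂, J₃] α) (J (b j : V))⟫)
            - ∑ i, ∑ j, ⟪(b i : V), (![J₁, J₂, J₃] α) (J (b j : V))⟫ ^ 2)
      = 9 * ((n : ℝ) - 1) := by
  have hA₁ : IsOrthogonalComplexStructure J₁ := ⟨hJ₁iso, hJ₁sq⟩
  have hA₂ : IsOrthogonalComplexStructure J₂ := ⟨hJ₂iso, hJ₂sq⟩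
  have hA₃ : IsOrthogonalComplexStructure J₃ := ⟨hJ₃iso, hJ₃sq⟩
  have hA : ∀ α, IsOrthogonalComplexStructure (![J₁, J₂, J₃] α) := by
    simpa [Fin.forall_fin_succ] using ⟨hA₁, hA₂, hA₃⟩
  have htrace : ∀ α, LinearMap.trace ℝ V (![J₁, J₂, J₃] α ∘ₗ J) = 0 := by
    simpa [Fin.forall_fin_succ] using
      ⟨trace_comp_eq_zero_of_anticommute hA₂.isUnit (by rw [h21, h12]) hc2,
        trace_comp_eq_zero_of_anticommute hA₃.isUnit (by rw [h32, h23]) hc3,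
        trace_comp_eq_zero_of_anticommute hA₁.isUnit (by rw [h13, h31]) hc1⟩
  convert curvature_contraction_eq_general ⟨hJiso, hJsq⟩ hA htrace he b using 1
  norm_num
end
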